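/- arXiv:2111.08754 — 3 statements merged into one kernel-verified Lean document; each statement's English description precedes it below -/
import Mathlib

section
/- The second-order differential operator D_e preserves the ideal I, i.e., D_e(I) ⊆ I; consequently D_e descends to a well-defined linear operator on the quotient algebra A = P/I. -/
open MvPolynomial Finset

/-- The polynomial ring `P = ℂ[p_1,…,p_k,q_1,…,q_{n-k}]`:
the variable `Sum.inl j` is `p_{j+1}` and `Sum.inr l` is `q_{l+1}`. -/
abbrev PR (n k : ℕ) := MvPolynomial (Fin k ⊕ Fin (n - k)) ℂ

/-- `pZ n k a` is the Chern class generator `p_a`, with the conventions `p_0 = 1`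
and `p_a = 0` for `a < 0` or `a > k`. -/
noncomputable def pZ (n k : ℕ) (a : ℤ) : PR n k :=
  if a = 0 then 1
  else if h : 1 ≤ a ∧ a ≤ (k : ℤ) then
    MvPolynomial.X (Sum.inl ⟨(a - 1).toNat, by omega⟩)
  else 0

/-- `qZ n k a` is the Chern class generator `q_a`, with the conventions `q_0 = 1`
and `q_a = 0` for `a < 0` or `a > n-k`. -/
noncomputable def qZ (n k : ℕ) (a : ℤ) : PR n k :=
  if a = 0 then 1
  else if h : 1 ≤ a ∧ a ≤ ((n - k : ℕ) : ℤ) then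
    MvPolynomial.X (Sum.inr ⟨(a - 1).toNat, by omega⟩)
  else 0

/-- `R_m = Σ_{r+s=m, r,s ≥ 0} p_r q_s`. -/
noncomputable def Rm (n k : ℕ) (m : ℕ) : PR n k :=
  ∑ x ∈ Finset.HasAntidiagonal.antidiagonal m, pZ n k x.1 * qZ n k x.2

/-- The ideal `I ⊆ P` generated by `R_1, …, R_n`. -/
noncomputable def Igr (n k : ℕ) : Ideal (PR n k) :=
  Ideal.span ((fun m => Rm n k m) '' (Finset.Icc 1 n : Finset ℕ))

/-- Multiplication by `g` as a linear endomorphism of `P`. -/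
noncomputable def Mop (n k : ℕ) (g : PR n k) : Module.End ℂ (PR n k) :=
  LinearMap.mulLeft ℂ g

/-- The partial derivative with respect to the variable `i`, as a linear endomorphism. -/
noncomputable def Pd (n k : ℕ) (i : Fin k ⊕ Fin (n - k)) : Module.End ℂ (PR n k) :=
  (MvPolynomial.pderiv i).toLinearMap

/-- The second-order differential operator
`D_e = -Σ_{j=1}^{k}(k-j+1)(n-k+j-1)·p_{j-1}·∂/∂p_j
      + Σ_{j=1}^{n-k}(k+j-1)(n-k-j+1)·q_{j-1}·∂/∂q_j
      + Σ_{j,l=1}^{k}(Σ_{d=0}^{j-1}(j+l-2d-1)·p_d·p_{j+l-d-1})·∂²/(∂p_j∂p_l)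
      - Σ_{j,l=1}^{n-k}(Σ_{d=0}^{j-1}(j+l-2d-1)·q_d·q_{j+l-d-1})·∂²/(∂q_j∂q_l)
      + 2 Σ_{j=1}^{k} Σ_{l=1}^{n-k}(j+l-1)·(Σ_{d=0}^{j-1} p_d·q_{j+l-d-1})·∂²/(∂p_j∂q_l)`.
(The index `j' : Fin k` corresponds to `j = j'+1`, and similarly for the other indices.) -/
noncomputable def De (n k : ℕ) : Module.End ℂ (PR n k) :=
  ∑ j : Fin k, (-(((k : ℂ) - (j : ℕ)) * ((n : ℂ) - (k : ℕ) + (j : ℕ)))) •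
      (Mop n k (pZ n k (j : ℕ)) * Pd n k (Sum.inl j))
  + ∑ l : Fin (n - k), (((k : ℂ) + (l : ℕ)) * ((n : ℂ) - (k : ℕ) - (l : ℕ))) •
      (Mop n k (qZ n k (l : ℕ)) * Pd n k (Sum.inr l))
  + ∑ j : Fin k, ∑ l : Fin k,
      Mop n k (∑ d ∈ Finset.range ((j : ℕ) + 1),
          ((((j : ℕ) : ℂ) + (l : ℕ) + 1 - 2 * (d : ℕ))) •
            (pZ n k d * pZ n k ((j : ℕ) + (l : ℕ) + 1 - (d : ℕ) : ℤ)))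
        * (Pd n k (Sum.inl j) * Pd n k (Sum.inl l))
  - ∑ j : Fin (n - k), ∑ l : Fin (n - k),
      Mop n k (∑ d ∈ Finset.range ((j : ℕ) + 1),
          ((((j : ℕ) : ℂ) + (l : ℕ) + 1 - 2 * (d : ℕ))) •
            (qZ n k d * qZ n k ((j : ℕ) + (l : ℕ) + 1 - (d : ℕ) : ℤ)))
        * (Pd n k (Sum.inr j) * Pd n k (Sum.inr l))
  + ∑ j : Fin k, ∑ l : Fin (n - k),
      (2 * (((j : ℕ) : ℂ) + (l : ℕ) + 1)) •
        (Mop n k (∑ d ∈ Finset.range ((j : ℕ) + 1),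
            pZ n k d * qZ n k ((j : ℕ) + (l : ℕ) + 1 - (d : ℕ) : ℤ))
          * (Pd n k (Sum.inl j) * Pd n k (Sum.inr l)))

/-!
Let `Γ(g, f) = D(gf) - g D(f) - f D(g)`, where `D = D_e`. As `D` has order two and `D(1) = 0`, `Γ`
is a derivation in each argument, so `D(I) ⊆ I` follows from `D(R_m) ∈ I` and `Γ(x, R_m) ∈ I` for
the generators `x` of `P`.

Let `p(t) = ∑ p_r t^r` and `q(t) = ∑ q_s t^s`, so that `p q = 1` over `A = P/I`. Modulo `I`,
`Γ(p_{j+1}, p_r)` and `Γ(p_{j+1}, q_s)` are twice the coefficients of `s^j t^r` and `s^j t^s` in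
`t / (t - s) * (t p(s) p'(t) - s p'(s) p(t))` and `t / (t - s) * (s p'(s) q(t) + t p(s) q'(t))`.
Multiplying the first numerator by `q(t)`, the second by `p(t)` and adding gives
`t p(s) (p q)'(t) = 0`, that is, `Γ(p_{j+1}, R_m) ∈ I`; exchanging `p` and `q` treats `q_{l+1}`.
Finally `D(R_{m+1})` is congruent to `m (n - 2 * k + m + 2) R_m`, which is zero in `A`.
-/

theorem derivation_mem_of_forall_X_mem {σ R M : Type*} [CommSemiring R] [AddCommMonoid M]
    [Module R M] [Module (MvPolynomial σ R) M] {N : Submodule (MvPolynomial σ R) M}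
    (δ : Derivation R (MvPolynomial σ R) M) (hδ : ∀ i, δ (X i) ∈ N) (f : MvPolynomial σ R) :
    δ f ∈ N := by
  induction f using MvPolynomial.induction_on with
  | C c => simp
  | add f g hf hg => simpa using add_mem hf hg
  | mul_X f i hf =>
    rw [Derivation.leibniz]
    exact add_mem (N.smul_mem _ (hδ i)) (N.smul_mem _ hf)

theorem derivation_mem_span_of_forall_mem {R A : Type*} [CommSemiring R] [CommSemiring A]
    [Algebra R A] (δ : Derivation R A A) {S : Set A} (hδ : ∀ s ∈ S, δ s ∈ Ideal.span S) {g : A}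
    (hg : g ∈ Ideal.span S) : δ g ∈ Ideal.span S := by
  induction hg using Submodule.span_induction with
  | mem s hs => exact hδ s hs
  | zero => simp
  | add x y _ _ hx hy => simpa using add_mem hx hy
  | smul f x hx ih =>
    rw [smul_eq_mul, Derivation.leibniz]
    exact add_mem (Ideal.mul_mem_left _ _ ih) (Ideal.mul_mem_right _ _ hx)

section SecondOrderOperator

variable {σ R : Type*} [Fintype σ] [CommSemiring R]
variable (b : σ → MvPolynomial σ R) (a : σ → σ → MvPolynomial σ R)

/-- The differential operator `∑ i, b i ∂ᵢ + ∑ i, ∑ j, a i j ∂ᵢ∂ⱼ`; the matrix `a` of second-order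
coefficients need not be symmetric. -/
noncomputable def secondOrderOp : Module.End R (MvPolynomial σ R) :=
  ∑ i, LinearMap.mulLeft R (b i) * (pderiv i).toLinearMap +
    ∑ i, ∑ j, LinearMap.mulLeft R (a i j) * ((pderiv i).toLinearMap * (pderiv j).toLinearMap)

/-- The carré du champ `Γ(g, f) = D(gf) - g D(f) - f D(g)` of `D = secondOrderOp b a`, without the
customary factor `1/2`. It is encoded as a derivation in its second argument. -/
noncomputable def carreDuChamp (g : MvPolynomial σ R) :
    Derivation R (MvPolynomial σ R) (MvPolynomial σ R) :=
  ∑ i, ∑ j, a i j • (pderiv i g • pderiv j + pderiv j g • pderiv i)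

theorem secondOrderOp_apply (f : MvPolynomial σ R) :
    secondOrderOp b a f =
      ∑ i, b i * pderiv i f + ∑ i, ∑ j, a i j * pderiv i (pderiv j f) := by
  simp [secondOrderOp, LinearMap.sum_apply]

theorem carreDuChamp_apply (g f : MvPolynomial σ R) :
    carreDuChamp a g f =
      ∑ i, ∑ j, a i j * (pderiv i g * pderiv j f + pderiv j g * pderiv i f) := by
  simp only [carreDuChamp, ← Derivation.coeFnAddMonoidHom_apply, map_sum, Finset.sum_apply]
  rfl

theorem carreDuChamp_comm (g f : MvPolynomial σ R) :
    carreDuChamp a g f = carreDuChamp a f g := by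
  simp only [carreDuChamp_apply]
  refine sum_congr rfl fun i _ ↦ sum_congr rfl fun j _ ↦ ?_
  ring

theorem carreDuChamp_X_X (i j : σ) : carreDuChamp a (X i) (X j) = a i j + a j i := by
  classical
  simp [carreDuChamp_apply, pderiv_X, Pi.single_apply, mul_add, sum_add_distrib]

theorem secondOrderOp_one : secondOrderOp b a 1 = 0 := by
  simp [secondOrderOp_apply]

theorem secondOrderOp_X (i : σ) : secondOrderOp b a (X i) = b i := by
  classical
  simp [secondOrderOp_apply, pderiv_X, Pi.single_apply, apply_ite]

theorem secondOrderOp_mul (f g : MvPolynomial σ R) :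
    secondOrderOp b a (f * g) =
      f * secondOrderOp b a g + g * secondOrderOp b a f + carreDuChamp a f g := by
  have first_order : ∑ i, b i * pderiv i (f * g) =
      f * ∑ i, b i * pderiv i g + g * ∑ i, b i * pderiv i f := by
    simp only [mul_sum, ← sum_add_distrib, Derivation.leibniz, smul_eq_mul]
    refine sum_congr rfl fun i _ ↦ ?_
    ring
  have second_order : ∑ i, ∑ j, a i j * pderiv i (pderiv j (f * g)) =
      f * ∑ i, ∑ j, a i j * pderiv i (pderiv j g) + g * ∑ i, ∑ j, a i j * pderiv i (pderiv j f) +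
        carreDuChamp a f g := by
    simp only [carreDuChamp_apply, mul_sum, ← sum_add_distrib, Derivation.leibniz, smul_eq_mul,
      map_add]
    refine sum_congr rfl fun i _ ↦ sum_congr rfl fun j _ ↦ ?_
    ring
  simp only [secondOrderOp_apply, first_order, second_order]
  ring

theorem secondOrderOp_mem_span {S : Set (MvPolynomial σ R)}
    (hD : ∀ s ∈ S, secondOrderOp b a s ∈ Ideal.span S)
    (hΓ : ∀ s ∈ S, ∀ i, carreDuChamp a (X i) s ∈ Ideal.span S) {g : MvPolynomial σ R}
    (hg : g ∈ Ideal.span S) : secondOrderOp b a g ∈ Ideal.span S := by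
  have carreDuChamp_mem (f x) (hx : x ∈ Ideal.span S) : carreDuChamp a f x ∈ Ideal.span S := by
    refine derivation_mem_span_of_forall_mem _ (fun s hs ↦ ?_) hx
    rw [carreDuChamp_comm]
    refine derivation_mem_of_forall_X_mem _ (fun i ↦ ?_) f
    rw [carreDuChamp_comm]
    exact hΓ s hs i
  induction hg using Submodule.span_induction with
  | mem s hs => exact hD s hs
  | zero => simp
  | add x y _ _ hx hy => simpa using add_mem hx hy
  | smul f x hx ih =>
    rw [smul_eq_mul, secondOrderOp_mul]
    exact add_mem (add_mem (Ideal.mul_mem_left _ _ ih) (Ideal.mul_mem_right _ _ hx))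
      (carreDuChamp_mem f x hx)

end SecondOrderOperator

section AntidiagonalPartialSum

variable {M : Type*} [AddCommMonoid M]

/-- The sum of `w d e` over the part `d ≤ a` of the antidiagonal `d + e = a + r`. With
`W = ∑ w d e s^d t^e`, this is the coefficient of `s^a t^r` in `t W(s, t) / (t - s)`, provided the
sums of `w` over full antidiagonals vanish. -/
def antidiagPartialSum (w : ℕ → ℕ → M) (a r : ℕ) : M :=
  ∑ d ∈ range (a + 1), w d (a + r - d)

theorem antidiagPartialSum_zero (w : ℕ → ℕ → M) (r : ℕ) : antidiagPartialSum w 0 r = w 0 r := by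
  simp [antidiagPartialSum]

theorem antidiagPartialSum_succ (w : ℕ → ℕ → M) (a r : ℕ) :
    antidiagPartialSum w (a + 1) r = antidiagPartialSum w a (r + 1) + w (a + 1) r := by
  simp only [antidiagPartialSum, sum_range_succ _ (a + 1), show a + 1 + r = a + (r + 1) by ring]
  congr 2
  omega

theorem antidiagPartialSum_zero_right (w : ℕ → ℕ → M) (a : ℕ) :
    antidiagPartialSum w a 0 = ∑ x ∈ antidiagonal a, w x.1 x.2 := by
  simp [antidiagPartialSum, Nat.sum_antidiagonal_eq_sum_range_succ w]

theorem antidiagPartialSum_eq_zero {w : ℕ → ℕ → M} {K : ℕ} (hw : ∀ d e, K < e → w d e = 0)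
    (a : ℕ) {r : ℕ} (hr : K < r) : antidiagPartialSum w a r = 0 :=
  sum_eq_zero fun d hd ↦ hw _ _ (by grind)

theorem antidiagPartialSum_swap {M : Type*} [AddCommGroup M] {w w' : ℕ → ℕ → M}
    (hw : ∀ a, antidiagPartialSum w a 0 = 0) (hw' : ∀ d e, w' d e = w e d) (a b : ℕ) :
    antidiagPartialSum w a (b + 1) = -antidiagPartialSum w' b (a + 1) := by
  have hw'_zero (b : ℕ) : antidiagPartialSum w' b 0 = 0 := by
    rw [← hw b, antidiagPartialSum_zero_right, antidiagPartialSum_zero_right,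
      ← Nat.sum_antidiagonal_swap]
    simp [hw']
  induction a generalizing b with
  | zero =>
    rw [antidiagPartialSum_zero, ← hw', eq_neg_iff_add_eq_zero, add_comm,
      ← antidiagPartialSum_succ, hw'_zero]
  | succ a ih =>
    rw [antidiagPartialSum_succ, ih, antidiagPartialSum_succ, ← hw']
    abel

theorem sum_antidiagonal_antidiagPartialSum (w : ℕ → ℕ → M) (m : ℕ) :
    ∑ x ∈ antidiagonal m, antidiagPartialSum w x.1 x.2 =
      ∑ x ∈ antidiagonal m, (x.2 + 1) • w x.1 x.2 := by
  calc ∑ x ∈ antidiagonal m, antidiagPartialSum w x.1 x.2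
      = ∑ a ∈ range (m + 1), ∑ d ∈ range (a + 1), w d (m - d) := by
        rw [Nat.sum_antidiagonal_eq_sum_range_succ (antidiagPartialSum w)]
        refine sum_congr rfl fun a ha ↦ ?_
        rw [antidiagPartialSum, Nat.add_sub_cancel' (by grind)]
    _ = ∑ d ∈ range (m + 1), (m - d + 1) • w d (m - d) := by
        rw [sum_range_diag_flip (m + 1) fun d _ ↦ w d (m - d)]
        refine sum_congr rfl fun d hd ↦ ?_
        rw [sum_const, card_range, Nat.sub_add_comm (by grind)]
    _ = _ := (Nat.sum_antidiagonal_eq_sum_range_succ (fun d e ↦ (e + 1) • w d e) m).symm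

end AntidiagonalPartialSum

section EulerCoeff

variable {A B : Type*} [CommSemiring A] [CommSemiring B]

theorem powerSeries_mk_const_mul (c : A) (f : ℕ → A) :
    PowerSeries.mk (fun r ↦ c * f r) = PowerSeries.C c * PowerSeries.mk f := by
  ext r
  simp

theorem coeff_X_mul_derivative (U : PowerSeries A) (r : ℕ) :
    PowerSeries.coeff r (PowerSeries.X * PowerSeries.derivative A U) =
      r * PowerSeries.coeff r U := by
  rcases r with _ | r
  · simp
  · rw [PowerSeries.coeff_succ_X_mul, PowerSeries.coeff_derivative, Nat.cast_succ, mul_comm]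

theorem X_mul_mk_antidiagPartialSum_succ {w : ℕ → ℕ → A}
    (hw : ∀ a, antidiagPartialSum w a 0 = 0) (a : ℕ) :
    PowerSeries.X * PowerSeries.mk (antidiagPartialSum w (a + 1)) =
      PowerSeries.mk (antidiagPartialSum w a) + PowerSeries.X * PowerSeries.mk (w (a + 1)) := by
  ext (_ | r)
  · simp [hw]
  · simp [PowerSeries.coeff_succ_X_mul, antidiagPartialSum_succ]

/-- The coefficient of `s^d t^e` in the image of `U(s) V(t)` under the Euler operator
`s ∂/∂s + t ∂/∂t`. -/
noncomputable def eulerCoeff (U V : PowerSeries A) (d e : ℕ) : A :=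
  ((d : A) + e) * (PowerSeries.coeff d U * PowerSeries.coeff e V)

theorem antidiagPartialSum_eulerCoeff_zero_right {U V : PowerSeries A} (hUV : U * V = 1) (a : ℕ) :
    antidiagPartialSum (eulerCoeff U V) a 0 = 0 := by
  have degree_mul_coeff : antidiagPartialSum (eulerCoeff U V) a 0 =
      a * PowerSeries.coeff a (U * V) := by
    rw [antidiagPartialSum_zero_right, PowerSeries.coeff_mul, mul_sum]
    refine sum_congr rfl fun x hx ↦ ?_
    rw [eulerCoeff, ← mem_antidiagonal.1 hx, Nat.cast_add]
  rw [degree_mul_coeff, hUV, PowerSeries.coeff_one]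
  split_ifs with ha <;> simp [ha]

theorem map_antidiagPartialSum_eulerCoeff (φ : A →+* B) (U V : PowerSeries A) (a r : ℕ) :
    φ (antidiagPartialSum (eulerCoeff U V) a r) =
      antidiagPartialSum (eulerCoeff (U.map φ) (V.map φ)) a r := by
  simp [antidiagPartialSum, eulerCoeff]

theorem mk_eulerCoeff (U V : PowerSeries A) (d : ℕ) :
    PowerSeries.mk (eulerCoeff U V d) = PowerSeries.C (PowerSeries.coeff d U) *
      (PowerSeries.X * PowerSeries.derivative A V + PowerSeries.C (d : A) * V) := by
  ext e
  simp only [eulerCoeff, PowerSeries.coeff_mk, PowerSeries.coeff_C_mul, map_add,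
    coeff_X_mul_derivative]
  ring

end EulerCoeff

section WronskianCoeff

variable {A B : Type*} [CommRing A] [CommRing B]

/-- The coefficient of `s^d t^e` in `t U(s) U'(t) - s U'(s) U(t)`. -/
noncomputable def wronskianCoeff (U : PowerSeries A) (d e : ℕ) : A :=
  ((e : A) - d) * (PowerSeries.coeff d U * PowerSeries.coeff e U)

theorem antidiagPartialSum_wronskianCoeff_zero_right (U : PowerSeries A) (a : ℕ) :
    antidiagPartialSum (wronskianCoeff U) a 0 = 0 := by
  simp only [antidiagPartialSum_zero_right, wronskianCoeff, sub_mul, sum_sub_distrib]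
  rw [← Nat.sum_antidiagonal_swap, sub_eq_zero]
  simp [mul_comm]

theorem antidiagPartialSum_wronskianCoeff_symm (U : PowerSeries A) (a b : ℕ) :
    antidiagPartialSum (wronskianCoeff U) a (b + 1) =
      antidiagPartialSum (wronskianCoeff U) b (a + 1) := by
  rw [antidiagPartialSum_swap (antidiagPartialSum_wronskianCoeff_zero_right U)
    (w' := -wronskianCoeff U) (fun d e ↦ by simp only [wronskianCoeff, Pi.neg_apply]; ring)]
  simp [antidiagPartialSum]

theorem map_antidiagPartialSum_wronskianCoeff (φ : A →+* B) (U : PowerSeries A) (a r : ℕ) :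
    φ (antidiagPartialSum (wronskianCoeff U) a r) =
      antidiagPartialSum (wronskianCoeff (U.map φ)) a r := by
  simp [antidiagPartialSum, wronskianCoeff]

theorem mk_wronskianCoeff (U : PowerSeries A) (d : ℕ) :
    PowerSeries.mk (wronskianCoeff U d) = PowerSeries.C (PowerSeries.coeff d U) *
      (PowerSeries.X * PowerSeries.derivative A U - PowerSeries.C (d : A) * U) := by
  ext e
  simp only [wronskianCoeff, PowerSeries.coeff_mk, PowerSeries.coeff_C_mul, map_sub,
    coeff_X_mul_derivative]
  ring

theorem antidiagPartialSum_eulerCoeff_swap {U V : PowerSeries A} (hUV : U * V = 1) (a b : ℕ) :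
    antidiagPartialSum (eulerCoeff U V) a (b + 1) =
      -antidiagPartialSum (eulerCoeff V U) b (a + 1) :=
  antidiagPartialSum_swap (antidiagPartialSum_eulerCoeff_zero_right hUV)
    (fun d e ↦ by simp only [eulerCoeff]; ring) a b

theorem mk_antidiagPartialSum_mul_add_eq_zero {w w' : ℕ → ℕ → A} {U V : PowerSeries A}
    (hw : ∀ a, antidiagPartialSum w a 0 = 0) (hw' : ∀ a, antidiagPartialSum w' a 0 = 0)
    (hrow : ∀ d, PowerSeries.mk (w d) * V + U * PowerSeries.mk (w' d) = 0) (a : ℕ) :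
    PowerSeries.mk (antidiagPartialSum w a) * V +
      U * PowerSeries.mk (antidiagPartialSum w' a) = 0 := by
  induction a with
  | zero =>
    simpa only [← funext (antidiagPartialSum_zero w), ← funext (antidiagPartialSum_zero w')]
      using hrow 0
  | succ a ih =>
    refine PowerSeries.X_mul_cancel ?_
    linear_combination V * X_mul_mk_antidiagPartialSum_succ hw a +
      U * X_mul_mk_antidiagPartialSum_succ hw' a + ih + PowerSeries.X * hrow (a + 1)

theorem mk_wronskianCoeff_mul_add_mul_mk_eulerCoeff {U V : PowerSeries A} (hUV : U * V = 1)
    (d : ℕ) :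
    PowerSeries.mk (wronskianCoeff U d) * V + U * PowerSeries.mk (eulerCoeff U V d) = 0 := by
  have deriv_mul : U * PowerSeries.derivative A V + V * PowerSeries.derivative A U = 0 := by
    simpa [Derivation.leibniz] using congrArg (PowerSeries.derivative A) hUV
  rw [mk_wronskianCoeff, mk_eulerCoeff]
  linear_combination PowerSeries.C (PowerSeries.coeff d U) * PowerSeries.X * deriv_mul

theorem mk_antidiagPartialSum_wronskianCoeff_mul_add {U V : PowerSeries A} (hUV : U * V = 1)
    (a : ℕ) :
    PowerSeries.mk (antidiagPartialSum (wronskianCoeff U) a) * V +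
      U * PowerSeries.mk (antidiagPartialSum (eulerCoeff U V) a) = 0 :=
  mk_antidiagPartialSum_mul_add_eq_zero (antidiagPartialSum_wronskianCoeff_zero_right U)
    (antidiagPartialSum_eulerCoeff_zero_right hUV)
    (mk_wronskianCoeff_mul_add_mul_mk_eulerCoeff hUV) a

theorem sum_antidiagonal_first_order_add_eulerCoeff {U V : PowerSeries A} (hUV : U * V = 1)
    (K L : A) (m : ℕ) :
    ∑ x ∈ antidiagonal m, (((K + x.2) * (L - x.2) - (K - x.1) * (L + x.1)) *
        (PowerSeries.coeff x.1 U * PowerSeries.coeff x.2 V) +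
      2 * antidiagPartialSum (eulerCoeff U V) x.1 x.2) = 0 := by
  calc _ = ∑ x ∈ antidiagonal m, m * (L - K + m + 2) *
          (PowerSeries.coeff x.1 U * PowerSeries.coeff x.2 V) := by
        rw [sum_add_distrib, ← mul_sum, sum_antidiagonal_antidiagPartialSum, mul_sum,
          ← sum_add_distrib]
        refine sum_congr rfl fun x hx ↦ ?_
        rw [← mem_antidiagonal.1 hx, eulerCoeff, nsmul_eq_mul]
        push_cast
        ring
    _ = m * (L - K + m + 2) * PowerSeries.coeff m (U * V) := by
        rw [PowerSeries.coeff_mul, mul_sum]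
    _ = 0 := by
        rw [hUV, PowerSeries.coeff_one]
        split_ifs with hm <;> simp [hm]

end WronskianCoeff

section Grassmannian

variable (n k : ℕ)

/-- The generating series `∑ p_r t^r` of the generators `p_r`. -/
noncomputable def pSeries : PowerSeries (PR n k) :=
  PowerSeries.mk fun r ↦ pZ n k r

/-- The generating series `∑ q_s t^s` of the generators `q_s`. -/
noncomputable def qSeries : PowerSeries (PR n k) :=
  PowerSeries.mk fun s ↦ qZ n k s

/-- The coefficients of the first-order part of `D_e`. -/
noncomputable def firstOrderCoeff : Fin k ⊕ Fin (n - k) → PR n k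
  | Sum.inl j => -((k - j) * ((n - k : ℕ) + j)) * pZ n k j
  | Sum.inr l => (k + l) * ((n - k : ℕ) - l) * qZ n k l

/-- The coefficients of the second-order part of `D_e`. The mixed terms all sit in the block
`∂/∂p_j ∂/∂q_l`, so this matrix is not symmetric. -/
noncomputable def secondOrderCoeff : Fin k ⊕ Fin (n - k) → Fin k ⊕ Fin (n - k) → PR n k
  | Sum.inl j, Sum.inl l => antidiagPartialSum (wronskianCoeff (pSeries n k)) j (l + 1)
  | Sum.inr j, Sum.inr l => -antidiagPartialSum (wronskianCoeff (qSeries n k)) j (l + 1)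
  | Sum.inl j, Sum.inr l =>
    2 * antidiagPartialSum (eulerCoeff (pSeries n k) (qSeries n k)) j (l + 1)
  | Sum.inr _, Sum.inl _ => 0

variable {n k}

theorem antidiagPartialSum_wronskianCoeff_mk {A : Type*} [CommRing A] [Algebra ℂ A] (f : ℤ → A)
    (j l : ℕ) :
    antidiagPartialSum (wronskianCoeff (PowerSeries.mk fun r : ℕ ↦ f r)) j (l + 1) =
      ∑ d ∈ range (j + 1), ((j : ℂ) + l + 1 - 2 * d) • (f d * f (j + l + 1 - d)) := by
  refine sum_congr rfl fun d hd ↦ ?_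
  have hdj : d ≤ j + l + 1 := by grind
  simp only [wronskianCoeff, PowerSeries.coeff_mk, ← add_assoc, Nat.cast_sub hdj, Nat.cast_add,
    Nat.cast_one, Algebra.smul_def, map_add, map_sub, map_mul, map_natCast, map_one, map_ofNat]
  ring

theorem antidiagPartialSum_eulerCoeff_mk {A : Type*} [CommSemiring A] (f g : ℤ → A) (j l : ℕ) :
    antidiagPartialSum (eulerCoeff (PowerSeries.mk fun r : ℕ ↦ f r)
        (PowerSeries.mk fun r : ℕ ↦ g r)) j (l + 1) =
      ((j : A) + l + 1) * ∑ d ∈ range (j + 1), f d * g (j + l + 1 - d) := by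
  rw [mul_sum]
  refine sum_congr rfl fun d hd ↦ ?_
  have hdj : d ≤ j + l + 1 := by grind
  have degree : (d : A) + (j + l + 1 - d : ℕ) = j + l + 1 := by
    exact_mod_cast congrArg (Nat.cast : ℕ → A) (Nat.add_sub_cancel' hdj)
  simp only [eulerCoeff, PowerSeries.coeff_mk, ← add_assoc, degree, Nat.cast_sub hdj, Nat.cast_add,
    Nat.cast_one]

theorem De_eq_secondOrderOp (hk : k ≤ n) :
    De n k = secondOrderOp (firstOrderCoeff n k) (secondOrderCoeff n k) := by
  refine LinearMap.ext fun f ↦ ?_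
  simp only [De, secondOrderOp_apply, Fintype.sum_sum_type, firstOrderCoeff, secondOrderCoeff,
    pSeries, qSeries, antidiagPartialSum_wronskianCoeff_mk, antidiagPartialSum_eulerCoeff_mk]
  simp only [Mop, Pd, LinearMap.add_apply, LinearMap.sub_apply, LinearMap.sum_apply,
    LinearMap.smul_apply, Module.End.mul_apply, LinearMap.mulLeft_apply, Derivation.coeFn_coe,
    Algebra.smul_def (A := PR n k), map_neg, map_mul, map_sub, map_add, map_natCast, map_one,
    map_ofNat, sum_add_distrib, zero_mul, sum_const_zero, neg_mul, sum_neg_distrib,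
    Nat.cast_sub hk, mul_assoc]
  abel

theorem pZ_zero : pZ n k 0 = 1 := by simp [pZ]

theorem qZ_zero : qZ n k 0 = 1 := by simp [qZ]

theorem pZ_succ (j : Fin k) : pZ n k ((j + 1 : ℕ) : ℤ) = X (Sum.inl j) := by
  rw [pZ, if_neg (by omega), dif_pos (by omega)]
  simp

theorem qZ_succ (l : Fin (n - k)) : qZ n k ((l + 1 : ℕ) : ℤ) = X (Sum.inr l) := by
  rw [qZ, if_neg (by omega), dif_pos (by omega)]
  simp

theorem pZ_eq_zero {r : ℕ} (hr : k < r) : pZ n k r = 0 := by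
  rw [pZ, if_neg (by omega), dif_neg (by omega)]

theorem qZ_eq_zero {s : ℕ} (hs : n - k < s) : qZ n k s = 0 := by
  rw [qZ, if_neg (by omega), dif_neg (by omega)]

theorem Rm_eq_coeff (m : ℕ) : Rm n k m = PowerSeries.coeff m (pSeries n k * qSeries n k) := by
  simp [Rm, PowerSeries.coeff_mul, pSeries, qSeries]

theorem Rm_eq_zero (hk : k ≤ n) {m : ℕ} (hm : n < m) : Rm n k m = 0 := by
  refine sum_eq_zero fun x hx ↦ ?_
  rw [HasAntidiagonal.mem_antidiagonal] at hx
  rcases lt_or_ge k x.1 with hp | hp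
  · rw [pZ_eq_zero hp, zero_mul]
  · rw [qZ_eq_zero (by omega), mul_zero]

theorem Rm_mem_Igr (hk : k ≤ n) {m : ℕ} (hm : m ≠ 0) : Rm n k m ∈ Igr n k := by
  rcases lt_or_ge n m with hnm | hmn
  · rw [Rm_eq_zero hk hnm]
    exact zero_mem _
  · exact Ideal.subset_span ⟨m, mem_coe.2 (mem_Icc.2 ⟨by omega, hmn⟩), rfl⟩

variable (n k) in
/-- The image of `∑ p_r t^r` in `A⟦t⟧`, where `A = P/I`. -/
noncomputable def pBar : PowerSeries (PR n k ⧸ Igr n k) :=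
  (pSeries n k).map (Ideal.Quotient.mk (Igr n k))

variable (n k) in
/-- The image of `∑ q_s t^s` in `A⟦t⟧`, where `A = P/I`. -/
noncomputable def qBar : PowerSeries (PR n k ⧸ Igr n k) :=
  (qSeries n k).map (Ideal.Quotient.mk (Igr n k))

theorem coeff_pBar (r : ℕ) :
    PowerSeries.coeff r (pBar n k) = Ideal.Quotient.mk (Igr n k) (pZ n k r) := by
  simp [pBar, pSeries]

theorem coeff_qBar (s : ℕ) :
    PowerSeries.coeff s (qBar n k) = Ideal.Quotient.mk (Igr n k) (qZ n k s) := by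
  simp [qBar, qSeries]

theorem pBar_mul_qBar (hk : k ≤ n) : pBar n k * qBar n k = 1 := by
  ext m
  rw [pBar, qBar, ← map_mul, PowerSeries.coeff_map, ← Rm_eq_coeff, PowerSeries.coeff_one]
  split_ifs with hm
  · simp [hm, Rm, pZ_zero, qZ_zero]
  · exact Ideal.Quotient.eq_zero_iff_mem.2 (Rm_mem_Igr hk hm)

local notation "Γ" => carreDuChamp (secondOrderCoeff n k)

theorem carreDuChamp_inl_pZ (j : Fin k) (r : ℕ) :
    Γ (X (Sum.inl j)) (pZ n k r) = 2 * antidiagPartialSum (wronskianCoeff (pSeries n k)) j r := by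
  rcases r with _ | r
  · simp [pZ_zero, antidiagPartialSum_wronskianCoeff_zero_right]
  rcases lt_or_ge r k with hr | hr
  · rw [pZ_succ ⟨r, hr⟩, carreDuChamp_X_X]
    simp only [secondOrderCoeff, antidiagPartialSum_wronskianCoeff_symm _ r, two_mul]
  · rw [pZ_eq_zero (by omega), map_zero, antidiagPartialSum_eq_zero (K := k) _ _ (by omega),
      mul_zero]
    intro d e he
    simp [wronskianCoeff, pSeries, pZ_eq_zero he]

theorem carreDuChamp_inr_qZ (l : Fin (n - k)) (s : ℕ) :
    Γ (X (Sum.inr l)) (qZ n k s) = -2 * antidiagPartialSum (wronskianCoeff (qSeries n k)) l s := by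
  rcases s with _ | s
  · simp [qZ_zero, antidiagPartialSum_wronskianCoeff_zero_right]
  rcases lt_or_ge s (n - k) with hs | hs
  · rw [qZ_succ ⟨s, hs⟩, carreDuChamp_X_X]
    simp only [secondOrderCoeff, antidiagPartialSum_wronskianCoeff_symm _ s]
    ring
  · rw [qZ_eq_zero (by omega), map_zero, antidiagPartialSum_eq_zero (K := n - k) _ _ (by omega),
      mul_zero]
    intro d e he
    simp [wronskianCoeff, qSeries, qZ_eq_zero he]

theorem quotientMk_carreDuChamp_inl_inr (j : Fin k) (l : Fin (n - k)) :
    Ideal.Quotient.mk (Igr n k) (Γ (X (Sum.inl j)) (X (Sum.inr l))) =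
      2 * antidiagPartialSum (eulerCoeff (pBar n k) (qBar n k)) j (l + 1) := by
  rw [carreDuChamp_X_X]
  simp only [secondOrderCoeff, add_zero, map_mul, map_ofNat, map_antidiagPartialSum_eulerCoeff,
    pBar, qBar]

theorem antidiagPartialSum_eulerCoeff_pBar_qBar_eq_zero {s : ℕ} (hs : n - k < s) (a : ℕ) :
    antidiagPartialSum (eulerCoeff (pBar n k) (qBar n k)) a s = 0 := by
  refine antidiagPartialSum_eq_zero (fun d e he ↦ ?_) a hs
  simp [eulerCoeff, coeff_qBar, qZ_eq_zero he]

theorem antidiagPartialSum_eulerCoeff_qBar_pBar_eq_zero {r : ℕ} (hr : k < r) (a : ℕ) :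
    antidiagPartialSum (eulerCoeff (qBar n k) (pBar n k)) a r = 0 := by
  refine antidiagPartialSum_eq_zero (fun d e he ↦ ?_) a hr
  simp [eulerCoeff, coeff_pBar, pZ_eq_zero he]

theorem quotientMk_carreDuChamp_inl_qZ (hk : k ≤ n) (j : Fin k) (s : ℕ) :
    Ideal.Quotient.mk (Igr n k) (Γ (X (Sum.inl j)) (qZ n k s)) =
      2 * antidiagPartialSum (eulerCoeff (pBar n k) (qBar n k)) j s := by
  rcases s with _ | s
  · simp [qZ_zero, antidiagPartialSum_eulerCoeff_zero_right (pBar_mul_qBar hk)]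
  rcases lt_or_ge s (n - k) with hs | hs
  · rw [qZ_succ ⟨s, hs⟩, quotientMk_carreDuChamp_inl_inr]
  · rw [qZ_eq_zero (by omega), antidiagPartialSum_eulerCoeff_pBar_qBar_eq_zero (by omega)]
    simp

theorem quotientMk_carreDuChamp_inr_pZ (hk : k ≤ n) (l : Fin (n - k)) (r : ℕ) :
    Ideal.Quotient.mk (Igr n k) (Γ (X (Sum.inr l)) (pZ n k r)) =
      -2 * antidiagPartialSum (eulerCoeff (qBar n k) (pBar n k)) l r := by
  have hqp : qBar n k * pBar n k = 1 := by rw [mul_comm, pBar_mul_qBar hk]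
  rcases r with _ | r
  · simp [pZ_zero, antidiagPartialSum_eulerCoeff_zero_right hqp]
  rcases lt_or_ge r k with hr | hr
  · rw [pZ_succ ⟨r, hr⟩, carreDuChamp_comm, quotientMk_carreDuChamp_inl_inr,
      antidiagPartialSum_eulerCoeff_swap hqp]
    ring
  · rw [pZ_eq_zero (by omega), antidiagPartialSum_eulerCoeff_qBar_pBar_eq_zero (by omega)]
    simp

theorem quotientMk_carreDuChamp_pZ_qZ (hk : k ≤ n) (a s : ℕ) :
    Ideal.Quotient.mk (Igr n k) (Γ (pZ n k (a + 1 : ℕ)) (qZ n k s)) =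
      2 * antidiagPartialSum (eulerCoeff (pBar n k) (qBar n k)) a s := by
  rcases lt_or_ge a k with ha | ha
  · rw [pZ_succ ⟨a, ha⟩, quotientMk_carreDuChamp_inl_qZ hk]
  rw [carreDuChamp_comm, pZ_eq_zero (by omega), map_zero, map_zero]
  rcases s with _ | s
  · rw [antidiagPartialSum_eulerCoeff_zero_right (pBar_mul_qBar hk), mul_zero]
  · rw [antidiagPartialSum_eulerCoeff_swap (pBar_mul_qBar hk),
      antidiagPartialSum_eulerCoeff_qBar_pBar_eq_zero (by omega), neg_zero, mul_zero]

theorem quotientMk_derivation_Rm (δ : Derivation ℂ (PR n k) (PR n k)) (m : ℕ) :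
    Ideal.Quotient.mk (Igr n k) (δ (Rm n k m)) = PowerSeries.coeff m
      (PowerSeries.mk (fun r ↦ Ideal.Quotient.mk (Igr n k) (δ (pZ n k r))) * qBar n k +
        pBar n k * PowerSeries.mk fun s ↦ Ideal.Quotient.mk (Igr n k) (δ (qZ n k s))) := by
  simp only [Rm, map_sum, map_add, PowerSeries.coeff_mul, ← sum_add_distrib]
  refine sum_congr rfl fun x _ ↦ ?_
  simp only [Derivation.leibniz, smul_eq_mul, map_add, map_mul, PowerSeries.coeff_mk, coeff_pBar,
    coeff_qBar]
  ring

theorem carreDuChamp_X_Rm_mem_Igr (hk : k ≤ n) (i : Fin k ⊕ Fin (n - k)) (m : ℕ) :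
    Γ (X i) (Rm n k m) ∈ Igr n k := by
  have hpq := pBar_mul_qBar hk
  have hqp : qBar n k * pBar n k = 1 := by rw [mul_comm, hpq]
  rw [← Ideal.Quotient.eq_zero_iff_mem, quotientMk_derivation_Rm, ← map_zero (PowerSeries.coeff m)]
  congr 1
  rcases i with j | l
  · simp only [carreDuChamp_inl_pZ, quotientMk_carreDuChamp_inl_qZ hk, map_mul, map_ofNat,
      map_antidiagPartialSum_wronskianCoeff, powerSeries_mk_const_mul]
    rw [← pBar]
    linear_combination 2 * mk_antidiagPartialSum_wronskianCoeff_mul_add hpq j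
  · simp only [carreDuChamp_inr_qZ, quotientMk_carreDuChamp_inr_pZ hk, map_mul, map_neg, map_ofNat,
      map_antidiagPartialSum_wronskianCoeff, powerSeries_mk_const_mul]
    rw [← qBar]
    linear_combination -2 * mk_antidiagPartialSum_wronskianCoeff_mul_add hqp l

theorem secondOrderOp_pZ_succ (r : ℕ) :
    secondOrderOp (firstOrderCoeff n k) (secondOrderCoeff n k) (pZ n k (r + 1 : ℕ)) =
      -((k - r) * ((n - k : ℕ) + r)) * pZ n k r := by
  rcases lt_trichotomy r k with hr | rfl | hr
  · rw [pZ_succ ⟨r, hr⟩, secondOrderOp_X, firstOrderCoeff]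
  · rw [pZ_eq_zero r.lt_succ_self]
    simp
  · rw [pZ_eq_zero hr, pZ_eq_zero (Nat.lt_succ_of_lt hr)]
    simp

theorem secondOrderOp_qZ_succ (s : ℕ) :
    secondOrderOp (firstOrderCoeff n k) (secondOrderCoeff n k) (qZ n k (s + 1 : ℕ)) =
      (k + s) * ((n - k : ℕ) - s) * qZ n k s := by
  rcases lt_trichotomy s (n - k) with hs | rfl | hs
  · rw [qZ_succ ⟨s, hs⟩, secondOrderOp_X, firstOrderCoeff]
  · rw [qZ_eq_zero (n - k).lt_succ_self]
    simp
  · rw [qZ_eq_zero hs, qZ_eq_zero (Nat.lt_succ_of_lt hs)]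
    simp

theorem secondOrderOp_Rm_succ (m : ℕ) :
    secondOrderOp (firstOrderCoeff n k) (secondOrderCoeff n k) (Rm n k (m + 1)) =
      ∑ x ∈ antidiagonal m, (((k + x.2) * ((n - k : ℕ) - x.2) - (k - x.1) * ((n - k : ℕ) + x.1)) *
        (pZ n k x.1 * qZ n k x.2) + Γ (pZ n k (x.1 + 1 : ℕ)) (qZ n k x.2)) := by
  simp only [Rm, map_sum, secondOrderOp_mul, sum_add_distrib]
  rw [Nat.sum_antidiagonal_succ', Nat.sum_antidiagonal_succ, Nat.sum_antidiagonal_succ]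
  simp only [secondOrderOp_pZ_succ, secondOrderOp_qZ_succ, Nat.cast_zero, pZ_zero, qZ_zero,
    secondOrderOp_one, carreDuChamp_comm _ 1, Derivation.map_one_eq_zero, mul_zero, zero_add]
  simp only [← sum_add_distrib]
  refine sum_congr rfl fun x _ ↦ ?_
  ring

theorem secondOrderOp_Rm_succ_mem_Igr (hk : k ≤ n) (m : ℕ) :
    secondOrderOp (firstOrderCoeff n k) (secondOrderCoeff n k) (Rm n k (m + 1)) ∈ Igr n k := by
  rw [← Ideal.Quotient.eq_zero_iff_mem, secondOrderOp_Rm_succ]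
  simp only [map_sum, map_add, map_sub, map_mul, map_natCast, quotientMk_carreDuChamp_pZ_qZ hk,
    ← coeff_pBar, ← coeff_qBar]
  exact sum_antidiagonal_first_order_add_eulerCoeff (pBar_mul_qBar hk) _ _ m

end Grassmannian

/-- The second-order differential operator `D_e` preserves the ideal `I`, i.e. `D_e(I) ⊆ I`;
consequently `D_e` descends to a well-defined linear operator on the quotient `A = P/I`. -/
theorem De_preserves_ideal (n k : ℕ) (hk1 : 1 ≤ k) (hk2 : k ≤ n - 1) :
    ∀ g ∈ Igr n k, De n k g ∈ Igr n k := by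
  have hk : k ≤ n := by omega
  rw [De_eq_secondOrderOp hk]
  intro g hg
  refine secondOrderOp_mem_span _ _ ?_ ?_ hg
  · rintro _ ⟨m, hm, rfl⟩
    obtain ⟨m, rfl⟩ := Nat.exists_eq_add_one.2 (mem_Icc.1 hm).1
    exact secondOrderOp_Rm_succ_mem_Igr hk m
  · rintro _ ⟨m, -, rfl⟩ i
    exact carreDuChamp_X_Rm_mem_Igr hk i m
end

section
/- As linear operators on the polynomial ring P, the commutator of D_h and D_e equals 2·D_e: [D_h, D_e] = 2·D_e. -/
open MvPolynomial Finset

/-- The operator `D_h = -2 Σ_{j=1}^{k} j·p_j·∂/∂p_j - 2 Σ_{j=1}^{n-k} j·q_j·∂/∂q_j + k(n-k)·id`. -/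
noncomputable def Dh (n k : ℕ) : Module.End ℂ (PR n k) :=
  ∑ j : Fin k, (-2 * ((j : ℕ) + 1) : ℂ) •
      (Mop n k (MvPolynomial.X (Sum.inl j)) * Pd n k (Sum.inl j))
  + ∑ l : Fin (n - k), (-2 * ((l : ℕ) + 1) : ℂ) •
      (Mop n k (MvPolynomial.X (Sum.inr l)) * Pd n k (Sum.inr l))
  + ((k * (n - k) : ℕ) : ℂ) • 1

/-!
Grade `P` by `deg p_j = deg q_j = j`. The Euler derivation `E` of this grading multiplies each
homogeneous polynomial by its degree, and `D_h = k(n-k) - 2E`. In `D_e`, multiplication by a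
homogeneous polynomial raises the degree by its degree and each partial derivative lowers it by
that of its variable; every term of `D_e`, whatever its scalar coefficient, thus lowers the degree
by exactly 1. Hence `[E, D_e] = -D_e` and `[D_h, D_e] = -2[E, D_e] = 2 D_e`.
-/

theorem sum_derivation_apply {ι R A M : Type*} [CommSemiring R] [CommSemiring A] [AddCommMonoid M]
    [Algebra R A] [Module R M] [Module A M] (s : Finset ι) (D : ι → Derivation R A M) (f : A) :
    (∑ i ∈ s, D i) f = ∑ i ∈ s, D i f := by
  rw [← Derivation.coeFnAddMonoidHom_apply, map_sum, Finset.sum_apply]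
  rfl

section Homogeneous

variable {R A : Type*} [CommRing R] [CommRing A] [Algebra R A]

/-- The elements of degree `a` for the grading of `A` by the eigenvalues of the derivation `D`,
which plays the role of an Euler operator. -/
def homogeneousElements (D : Derivation R A A) (a : R) : Submodule R A :=
  Module.End.eigenspace (D : Module.End R A) a

/-- The linear operators `T` with `[D, T] = a • T`: they raise degree by `a` in the grading of `A`
by the eigenvalues of `D`. -/
def homogeneousOperators (D : Derivation R A A) (a : R) : Submodule R (Module.End R A) :=
  Module.End.eigenspace
    (LinearMap.mulLeft R (D : Module.End R A) - LinearMap.mulRight R (D : Module.End R A)) a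

variable {D : Derivation R A A} {a b : R}

theorem mem_homogeneousElements_iff {f : A} : f ∈ homogeneousElements D a ↔ D f = a • f :=
  Module.End.mem_eigenspace_iff

theorem mem_homogeneousOperators_iff {T : Module.End R A} :
    T ∈ homogeneousOperators D a ↔ (D : Module.End R A) * T - T * D = a • T :=
  Module.End.mem_eigenspace_iff

theorem one_mem_homogeneousElements : 1 ∈ homogeneousElements D 0 := by
  rw [mem_homogeneousElements_iff, D.map_one_eq_zero, zero_smul]

theorem mul_mem_homogeneousElements {f g : A} (hf : f ∈ homogeneousElements D a)
    (hg : g ∈ homogeneousElements D b) : f * g ∈ homogeneousElements D (a + b) := by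
  rw [mem_homogeneousElements_iff] at *
  rw [D.leibniz, hf, hg]
  simp only [smul_eq_mul, Algebra.smul_def, map_add]
  ring

theorem mul_mem_homogeneousOperators {S T : Module.End R A} (hS : S ∈ homogeneousOperators D a)
    (hT : T ∈ homogeneousOperators D b) : S * T ∈ homogeneousOperators D (a + b) := by
  rw [mem_homogeneousOperators_iff] at *
  set E : Module.End R A := D.toLinearMap
  calc E * (S * T) - S * T * E = (E * S - S * E) * T + S * (E * T - T * E) := by
        simp only [mul_sub, sub_mul, mul_assoc]; abel
    _ = (a + b) • (S * T) := by rw [hS, hT, smul_mul_assoc, mul_smul_comm, add_smul]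

theorem mulLeft_mem_homogeneousOperators {g : A} (hg : g ∈ homogeneousElements D a) :
    LinearMap.mulLeft R g ∈ homogeneousOperators D a := by
  rw [mem_homogeneousElements_iff] at hg
  rw [mem_homogeneousOperators_iff]
  ext f
  simp [hg, mul_comm f]

end Homogeneous

section WeightedEuler

variable {σ R : Type*} [CommRing R]

/-- The Euler derivation `∑ i, w i • X i * ∂/∂X i` of the grading of `MvPolynomial σ R` in which
`X i` has degree `w i`. It is defined by its values on the variables, so that `σ` may be
infinite. -/
noncomputable def weightedEuler (w : σ → R) :
    Derivation R (MvPolynomial σ R) (MvPolynomial σ R) :=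
  mkDerivation R fun i => w i • X i

variable (w : σ → R) (i : σ)

theorem weightedEuler_X : weightedEuler w (X i) = w i • X i :=
  mkDerivation_X R _ i

theorem weightedEuler_eq_sum [Fintype σ] :
    weightedEuler w = ∑ i, w i • (X i : MvPolynomial σ R) • pderiv i := by
  ext1 j
  rw [weightedEuler_X, sum_derivation_apply, Finset.sum_eq_single j]
  · simp
  · intro i _ hij
    simp [pderiv_X_of_ne hij.symm]
  · simp

theorem weightedEuler_apply [Fintype σ] (f : MvPolynomial σ R) :
    weightedEuler w f = ∑ i, w i • (X i * pderiv i f) := by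
  simp only [weightedEuler_eq_sum, sum_derivation_apply, Derivation.smul_apply, smul_eq_mul]

theorem X_mem_homogeneousElements : X i ∈ homogeneousElements (weightedEuler w) (w i) :=
  mem_homogeneousElements_iff.2 (weightedEuler_X w i)

theorem lie_weightedEuler_pderiv :
    ⁅weightedEuler w, (pderiv i : Derivation R (MvPolynomial σ R) (MvPolynomial σ R))⁆ =
      -w i • pderiv i := by
  ext1 j
  rcases eq_or_ne j i with rfl | hj
  · simp [Derivation.commutator_apply, weightedEuler_X]
  · simp [Derivation.commutator_apply, weightedEuler_X, pderiv_X_of_ne hj]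

theorem pderiv_mem_homogeneousOperators :
    (pderiv i).toLinearMap ∈ homogeneousOperators (weightedEuler w) (-w i) :=
  mem_homogeneousOperators_iff.2 <|
    congrArg Derivation.toLinearMap (lie_weightedEuler_pderiv w i)

variable {w i} {g : MvPolynomial σ R} {a : R}

theorem mulLeft_mul_pderiv_mem_homogeneousOperators
    (hg : g ∈ homogeneousElements (weightedEuler w) (a + w i)) :
    LinearMap.mulLeft R g * (pderiv i).toLinearMap ∈ homogeneousOperators (weightedEuler w) a := by
  simpa only [add_neg_cancel_right] using mul_mem_homogeneousOperators
    (mulLeft_mem_homogeneousOperators hg) (pderiv_mem_homogeneousOperators w i)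

theorem mulLeft_mul_pderiv_mul_pderiv_mem_homogeneousOperators {j : σ}
    (hg : g ∈ homogeneousElements (weightedEuler w) (a + w i + w j)) :
    LinearMap.mulLeft R g * ((pderiv i).toLinearMap * (pderiv j).toLinearMap) ∈
      homogeneousOperators (weightedEuler w) a := by
  rw [add_right_comm] at hg
  simpa only [mul_assoc, add_neg_cancel_right] using mul_mem_homogeneousOperators
    (mulLeft_mul_pderiv_mem_homogeneousOperators hg) (pderiv_mem_homogeneousOperators w j)

end WeightedEuler

/-- The degrees `deg p_j = deg q_j = j` of the generators of `P`, here indexed from `0`. -/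
def chernDegree (n k : ℕ) : Fin k ⊕ Fin (n - k) → ℂ :=
  Sum.elim (fun j => (j : ℕ) + 1) (fun l => (l : ℕ) + 1)

section ChernOperators

variable (n k : ℕ)

theorem Dh_eq_sub_weightedEuler :
    Dh n k = ((k * (n - k) : ℕ) : ℂ) • 1
      - (2 : ℂ) • (weightedEuler (chernDegree n k) : Module.End ℂ (PR n k)) := by
  refine LinearMap.ext fun f => ?_
  have hEuler : weightedEuler (chernDegree n k) f =
      ∑ j : Fin k, ((j : ℕ) + 1 : ℂ) • (X (Sum.inl j) * pderiv (Sum.inl j) f) +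
        ∑ l : Fin (n - k), ((l : ℕ) + 1 : ℂ) • (X (Sum.inr l) * pderiv (Sum.inr l) f) := by
    rw [weightedEuler_apply, Fintype.sum_sum_type]
    rfl
  simp only [Dh, Mop, Pd, LinearMap.add_apply, LinearMap.sub_apply, LinearMap.smul_apply,
    LinearMap.sum_apply, Module.End.mul_apply, LinearMap.mulLeft_apply, Derivation.coeFn_coe,
    hEuler, mul_smul, ← Finset.smul_sum]
  module

theorem pZ_mem_homogeneousElements (a : ℤ) :
    pZ n k a ∈ homogeneousElements (weightedEuler (chernDegree n k)) a := by
  unfold pZ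
  split_ifs with h0 h
  · simpa [h0] using one_mem_homogeneousElements
  · convert X_mem_homogeneousElements (chernDegree n k) _
    have hdeg : a = (a - 1).toNat + 1 := by omega
    simpa [chernDegree] using congrArg (Int.cast : ℤ → ℂ) hdeg
  · exact zero_mem _

theorem qZ_mem_homogeneousElements (a : ℤ) :
    qZ n k a ∈ homogeneousElements (weightedEuler (chernDegree n k)) a := by
  unfold qZ
  split_ifs with h0 h
  · simpa [h0] using one_mem_homogeneousElements
  · convert X_mem_homogeneousElements (chernDegree n k) _
    have hdeg : a = (a - 1).toNat + 1 := by omega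
    simpa [chernDegree] using congrArg (Int.cast : ℤ → ℂ) hdeg
  · exact zero_mem _

theorem De_mem_homogeneousOperators :
    De n k ∈ homogeneousOperators (weightedEuler (chernDegree n k)) (-1) := by
  have hp := pZ_mem_homogeneousElements n k
  have hq := qZ_mem_homogeneousElements n k
  refine add_mem (sub_mem (add_mem (add_mem ?_ ?_) ?_) ?_) ?_
  · refine sum_mem fun j _ => Submodule.smul_mem _ _ ?_
    refine mulLeft_mul_pderiv_mem_homogeneousOperators ?_
    convert hp j using 2
    simp [chernDegree]
  · refine sum_mem fun l _ => Submodule.smul_mem _ _ ?_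
    refine mulLeft_mul_pderiv_mem_homogeneousOperators ?_
    convert hq l using 2
    simp [chernDegree]
  · refine sum_mem fun j _ => sum_mem fun l _ => ?_
    refine mulLeft_mul_pderiv_mul_pderiv_mem_homogeneousOperators ?_
    refine sum_mem fun d _ => Submodule.smul_mem _ _ ?_
    convert mul_mem_homogeneousElements (hp d) (hp (j + l + 1 - d)) using 2
    push_cast [chernDegree, Sum.elim_inl]
    ring
  · refine sum_mem fun j _ => sum_mem fun l _ => ?_
    refine mulLeft_mul_pderiv_mul_pderiv_mem_homogeneousOperators ?_
    refine sum_mem fun d _ => Submodule.smul_mem _ _ ?_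
    convert mul_mem_homogeneousElements (hq d) (hq (j + l + 1 - d)) using 2
    push_cast [chernDegree, Sum.elim_inr]
    ring
  · refine sum_mem fun j _ => sum_mem fun l _ => Submodule.smul_mem _ _ ?_
    refine mulLeft_mul_pderiv_mul_pderiv_mem_homogeneousOperators ?_
    refine sum_mem fun d _ => ?_
    convert mul_mem_homogeneousElements (hp d) (hq (j + l + 1 - d)) using 2
    push_cast [chernDegree, Sum.elim_inl, Sum.elim_inr]
    ring

end ChernOperators

/-- As operators on `P`, `[D_h, D_e] = 2·D_e`. -/
theorem commutator_Dh_De (n k : ℕ) (hk1 : 1 ≤ k) (hk2 : k ≤ n - 1) :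
    Dh n k * De n k - De n k * Dh n k = (2 : ℂ) • De n k := by
  have hDe := mem_homogeneousOperators_iff.1 (De_mem_homogeneousOperators n k)
  rw [Dh_eq_sub_weightedEuler]
  set E : Module.End ℂ (PR n k) := (weightedEuler (chernDegree n k)).toLinearMap
  set c : ℂ := ((k * (n - k) : ℕ) : ℂ)
  calc (c • 1 - (2 : ℂ) • E) * De n k - De n k * (c • 1 - (2 : ℂ) • E)
      = (-2 : ℂ) • (E * De n k - De n k * E) := by
        simp only [sub_mul, mul_sub, smul_mul_assoc, mul_smul_comm, one_mul, mul_one]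
        module
    _ = (2 : ℂ) • De n k := by rw [hDe, smul_smul]; norm_num
end

section
/- The quotient algebra A = P/I is a finite-dimensional ℂ-vector space of dimension equal to the binomial coefficient C(n,k); that is, dim_ℂ(P/I) = n!/(k!(n−k)!). (This is the vector-space content of the isomorphism of the cohomology ring H*(Gr(k,n),ℂ) of the complex Grassmannian with the k-th exterior power of the standard n-dimensional representation.) -/
open MvPolynomial Finset

/-!
The relations `R_1 = ⋯ = R_n = 0` say that the monic polynomials
`t^k + p_1 t^(k-1) + ⋯ + p_k` and `t^(n-k) + q_1 t^(n-k-1) + ⋯ + q_(n-k)` have product `t^n`, so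
`P/I` is the universal ring over which `t^n` factors into monic polynomials of degrees `k` and
`n - k`. Over any base `R`, adjoining a root `x` of the first factor `p₁` to the universal
factorization ring of `p = p₁ p₂` is the same as adjoining a root `x` of `p` to `R` and then
universally factoring `p / (X - x)`. Comparing dimensions gives
`dim(m + 1, n + 1) * (m + 1) = (n + 1) * dim(m, n)`, the recursion satisfied by binomial
coefficients.
-/

open Polynomial (MonicDegreeEq UniversalFactorizationRing)
open Polynomial.UniversalFactorizationRing (factor₁ factor₂ factor₁_mul_factor₂)

section MonicDegreeEq

variable {R S T : Type*} [CommRing R] [CommRing S] [CommRing T] {n m k : ℕ}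

lemma monicDegreeEq_map_map (f : MonicDegreeEq R n) (φ : R →+* S) (ψ : S →+* T) :
    (f.map φ).map ψ = f.map (ψ.comp φ) :=
  Subtype.ext (Polynomial.map_map ..)

lemma monicDegreeEq_map_id (f : MonicDegreeEq R n) : f.map (.id R) = f :=
  Subtype.ext Polynomial.map_id

instance subsingleton_monicDegreeEq_zero : Subsingleton (MonicDegreeEq R 0) where
  allEq f g := by
    nontriviality R
    exact Subtype.ext ((f.monic.natDegree_eq_zero.1 f.natDegree).trans
      (g.monic.natDegree_eq_zero.1 g.natDegree).symm)

/-- The product of monic polynomials of degrees `m` and `k`, as a monic polynomial of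
degree `n = m + k`. -/
noncomputable def monicMul (hn : n = m + k) (g : MonicDegreeEq R m) (h : MonicDegreeEq R k) :
    MonicDegreeEq R n :=
  ⟨g.1 * h.1, by
    nontriviality R
    refine (MonicDegreeEq.mk _ (g.monic.mul h.monic) ?_).2
    rw [g.monic.natDegree_mul h.monic, g.natDegree, h.natDegree, hn]⟩

lemma map_monicMul (hn : n = m + k) (g : MonicDegreeEq R m) (h : MonicDegreeEq R k)
    (φ : R →+* S) : (monicMul hn g h).map φ = monicMul hn (g.map φ) (h.map φ) :=
  Subtype.ext (Polynomial.map_mul φ)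

lemma monicMul_left_injective (hn : n = m + k) (h : MonicDegreeEq R k) :
    Function.Injective fun g ↦ monicMul hn g h := fun _ _ hg ↦
  Subtype.ext (h.monic.isRegular.right (congrArg Subtype.val hg))

lemma exists_monicMul_eq_of_dvd (hn : n = m + k) {f : MonicDegreeEq R n} {h : MonicDegreeEq R k}
    (hf : h.1 ∣ f.1) : ∃ g, monicMul hn g h = f := by
  obtain ⟨g, hg⟩ := hf
  have hm : g.Monic := h.monic.of_mul_monic_left (hg ▸ f.monic)
  nontriviality R
  have hdeg : g.natDegree = m := by
    have := f.natDegree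
    rw [hg, h.monic.natDegree_mul hm, h.natDegree] at this
    omega
  exact ⟨.mk g hm hdeg, Subtype.ext ((mul_comm _ _).trans hg.symm)⟩

/-- The polynomial `X - r`, as a monic polynomial of degree `1`. -/
noncomputable def monicXSubC (r : R) : MonicDegreeEq R 1 :=
  ⟨Polynomial.X - Polynomial.C r, by simp,
    fun i hi ↦ by grind [Polynomial.coeff_sub, Polynomial.coeff_X, Polynomial.coeff_C]⟩

lemma map_monicXSubC (r : R) (φ : R →+* S) : (monicXSubC r).map φ = monicXSubC (φ r) :=
  Subtype.ext (by simp [monicXSubC])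

lemma eval₂_eq_zero_of_map_eq_monicMul {f : MonicDegreeEq R (n + 1)} {φ : R →+* S}
    {g : MonicDegreeEq S n} {s : S} (h : f.map φ = monicMul rfl g (monicXSubC s)) :
    f.1.eval₂ φ s = 0 := by
  rw [Polynomial.eval₂_eq_eval_map, ← MonicDegreeEq.map_coe, h]
  simp [monicMul, monicXSubC]

end MonicDegreeEq

section RootQuotient

variable {R S : Type*} [CommRing R] [CommRing S] {d : ℕ}

lemma exists_monicMul_root_eq (f : MonicDegreeEq R (d + 1)) :
    ∃ g, monicMul rfl g (monicXSubC (AdjoinRoot.root f.1)) = f.map (AdjoinRoot.of f.1) :=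
  exists_monicMul_eq_of_dvd rfl (Polynomial.dvd_iff_isRoot.2 (AdjoinRoot.isRoot_root f.1))

/-- The quotient `f / (X - x)`, where `x` is the root of `f` adjoined to `R` in `R[x]/(f)`. It is
unique by `monicMul_left_injective`. -/
noncomputable def rootQuotient (f : MonicDegreeEq R (d + 1)) :
    MonicDegreeEq (AdjoinRoot f.1) d :=
  (exists_monicMul_root_eq f).choose

lemma monicMul_rootQuotient (f : MonicDegreeEq R (d + 1)) :
    monicMul rfl (rootQuotient f) (monicXSubC (AdjoinRoot.root f.1)) =
      f.map (AdjoinRoot.of f.1) :=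
  (exists_monicMul_root_eq f).choose_spec

lemma map_rootQuotient_eq_iff {f : MonicDegreeEq R (d + 1)} {φ : AdjoinRoot f.1 →+* S}
    {g : MonicDegreeEq S d} : (rootQuotient f).map φ = g ↔
      monicMul rfl g (monicXSubC (φ (AdjoinRoot.root f.1))) =
        f.map (φ.comp (AdjoinRoot.of f.1)) := by
  rw [← monicDegreeEq_map_map, ← monicMul_rootQuotient, map_monicMul, map_monicXSubC,
    (monicMul_left_injective rfl _).eq_iff, eq_comm]

end RootQuotient

section UniversalFactorizationRing

variable {R S : Type*} [CommRing R] [CommRing S] {n m k : ℕ}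

section Lift

variable (hn : n = m + k) (p : MonicDegreeEq R n)

lemma monicMul_factors :
    monicMul hn (factor₁ m k hn p) (factor₂ m k hn p) = p.map (algebraMap R _) :=
  Subtype.ext (factor₁_mul_factor₂ m k hn p)

lemma factor₁_dvd : (factor₁ m k hn p).1 ∣ p.1.map (algebraMap R _) :=
  ⟨_, (factor₁_mul_factor₂ m k hn p).symm⟩

variable (φ : R →+* S) (g : MonicDegreeEq S m) (h : MonicDegreeEq S k)
  (hgh : monicMul hn g h = p.map φ)

/-- The ring homomorphism out of the universal factorization ring of `p` that classifies a
factorization `g * h` of the image of `p` under a ring homomorphism `φ`. -/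
noncomputable def liftFactorization : UniversalFactorizationRing m k hn p →+* S :=
  letI := φ.toAlgebra
  (UniversalFactorizationRing.homEquiv S m k hn p).symm ⟨(g, h), congrArg Subtype.val hgh⟩

lemma liftFactorization_comp_algebraMap :
    (liftFactorization hn p φ g h hgh).comp (algebraMap R _) = φ :=
  letI := φ.toAlgebra
  ((UniversalFactorizationRing.homEquiv S m k hn p).symm
    ⟨(g, h), congrArg Subtype.val hgh⟩).comp_algebraMap

lemma factor₁_map_liftFactorization :
    (factor₁ m k hn p).map (liftFactorization hn p φ g h hgh) = g :=
  letI := φ.toAlgebra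
  congrArg (·.1.1) ((UniversalFactorizationRing.homEquiv S m k hn p).apply_symm_apply
    ⟨(g, h), congrArg Subtype.val hgh⟩)

lemma factor₂_map_liftFactorization :
    (factor₂ m k hn p).map (liftFactorization hn p φ g h hgh) = h :=
  letI := φ.toAlgebra
  congrArg (·.1.2) ((UniversalFactorizationRing.homEquiv S m k hn p).apply_symm_apply
    ⟨(g, h), congrArg Subtype.val hgh⟩)

end Lift

lemma ringHom_ext_factors {hn : n = m + k} {p : MonicDegreeEq R n}
    {φ ψ : UniversalFactorizationRing m k hn p →+* S}
    (h₀ : φ.comp (algebraMap R _) = ψ.comp (algebraMap R _))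
    (h₁ : (factor₁ m k hn p).map φ = (factor₁ m k hn p).map ψ)
    (h₂ : (factor₂ m k hn p).map φ = (factor₂ m k hn p).map ψ) : φ = ψ := by
  let : Algebra R S := (φ.comp (algebraMap R _)).toAlgebra
  let φ' : UniversalFactorizationRing m k hn p →ₐ[R] S := ⟨φ, fun _ ↦ rfl⟩
  let ψ' : UniversalFactorizationRing m k hn p →ₐ[R] S :=
    ⟨ψ, fun r ↦ (RingHom.congr_fun h₀ r).symm⟩
  have : φ' = ψ' := (UniversalFactorizationRing.homEquiv S m k hn p).injective <|
    Subtype.ext (Prod.ext h₁ h₂)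
  exact congrArg AlgHom.toRingHom this

lemma bijective_algebraMap_universalFactorizationRing_zero (hn : n = 0 + k)
    (p : MonicDegreeEq R n) :
    Function.Bijective (algebraMap R (UniversalFactorizationRing 0 k hn p)) := by
  obtain rfl : n = k := by omega
  let one : MonicDegreeEq R 0 := ⟨1, by simp, fun i hi ↦ by simp [Polynomial.coeff_one, hi.ne']⟩
  let ε := liftFactorization hn p (.id R) one p (Subtype.ext (by simp [monicMul, one]))
  have hε : ε.comp (algebraMap R _) = .id R := liftFactorization_comp_algebraMap ..
  have h₂ : factor₂ 0 n hn p = p.map (algebraMap R _) := by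
    rw [← monicMul_factors, Subsingleton.elim (factor₁ 0 n hn p) (one.map (algebraMap R _))]
    exact Subtype.ext (by simp [monicMul, one])
  have hε' : (algebraMap R _).comp ε = .id _ := by
    refine ringHom_ext_factors ?_ (Subsingleton.elim _ _) ?_
    · rw [RingHom.comp_assoc, hε]; rfl
    · rw [← monicDegreeEq_map_map, factor₂_map_liftFactorization, ← h₂,
        monicDegreeEq_map_id]
  exact Function.bijective_iff_has_inverse.2
    ⟨ε, RingHom.congr_fun hε, RingHom.congr_fun hε'⟩

end UniversalFactorizationRing

section AdjoinRootOfFactor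

variable {R : Type*} [CommRing R] {n m k : ℕ}

/-- The map `R[x]/(p) → A[x]/(p₁)`, where `p₁` is the first factor of `p` over its universal
factorization ring `A`. -/
noncomputable def adjoinRootToFactor (hn : n = m + k) (p : MonicDegreeEq R n) :
    AdjoinRoot p.1 →+* AdjoinRoot (factor₁ m k hn p).1 :=
  AdjoinRoot.map (algebraMap R _) _ _ (factor₁_dvd hn p)

lemma adjoinRootToFactor_root (hn : n = m + k) (p : MonicDegreeEq R n) :
    adjoinRootToFactor hn p (AdjoinRoot.root _) = AdjoinRoot.root _ :=
  AdjoinRoot.map_root _ _ _ (factor₁_dvd hn p)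

lemma adjoinRootToFactor_comp_of (hn : n = m + k) (p : MonicDegreeEq R n) :
    (adjoinRootToFactor hn p).comp (AdjoinRoot.of _) = (AdjoinRoot.of _).comp (algebraMap R _) :=
  RingHom.ext (AdjoinRoot.map_of _ _ _ (factor₁_dvd hn p))

variable (hn : n = m + k) (hn' : n + 1 = m + 1 + k) (p : MonicDegreeEq R (n + 1))

lemma monicMul_rootQuotient_factor₁ :
    monicMul hn (rootQuotient (factor₁ (m + 1) k hn' p))
        ((factor₂ (m + 1) k hn' p).map (AdjoinRoot.of _)) =
      (rootQuotient p).map (adjoinRootToFactor hn' p) := by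
  symm
  rw [map_rootQuotient_eq_iff, adjoinRootToFactor_root, adjoinRootToFactor_comp_of,
    ← monicDegreeEq_map_map, ← monicMul_factors, map_monicMul, ← monicMul_rootQuotient]
  exact Subtype.ext (mul_right_comm _ _ _)

/-- The map classifying the factorization `p / (X - x) = (p₁ / (X - x)) * p₂` over `A[x]/(p₁)`,
where `p₁ * p₂` is the universal factorization of `p`. -/
noncomputable def toAdjoinRootFactor :
    UniversalFactorizationRing m k hn (rootQuotient p) →+*
      AdjoinRoot (factor₁ (m + 1) k hn' p).1 :=
  liftFactorization hn _ _ _ _ (monicMul_rootQuotient_factor₁ hn hn' p)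

lemma monicMul_factors_rootQuotient :
    monicMul hn'
        (monicMul rfl (factor₁ m k hn (rootQuotient p))
          (monicXSubC (algebraMap _ _ (AdjoinRoot.root p.1))))
        (factor₂ m k hn (rootQuotient p)) =
      p.map ((algebraMap _ _).comp (AdjoinRoot.of p.1)) := by
  rw [← monicDegreeEq_map_map, ← monicMul_rootQuotient, map_monicMul, map_monicXSubC,
    ← monicMul_factors]
  exact Subtype.ext (mul_right_comm _ _ _)

/-- The map classifying the factorization `p = (q₁ * (X - x)) * q₂`, where `q₁ * q₂` is the
universal factorization of `p / (X - x)` over `R[x]/(p)`. -/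
noncomputable def toRootQuotientFactorization :
    UniversalFactorizationRing (m + 1) k hn' p →+*
      UniversalFactorizationRing m k hn (rootQuotient p) :=
  liftFactorization hn' p _ _ _ (monicMul_factors_rootQuotient hn hn' p)

lemma factor₁_map_toRootQuotientFactorization :
    (factor₁ (m + 1) k hn' p).map (toRootQuotientFactorization hn hn' p) =
      monicMul rfl (factor₁ m k hn (rootQuotient p))
        (monicXSubC (algebraMap _ _ (AdjoinRoot.root p.1))) :=
  factor₁_map_liftFactorization ..

/-- The extension of `toRootQuotientFactorization` to `A[x]/(p₁)` that sends `x` to `x`. -/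
noncomputable def ofAdjoinRootFactor :
    AdjoinRoot (factor₁ (m + 1) k hn' p).1 →+*
      UniversalFactorizationRing m k hn (rootQuotient p) :=
  AdjoinRoot.lift (toRootQuotientFactorization hn hn' p) _
    (eval₂_eq_zero_of_map_eq_monicMul (factor₁_map_toRootQuotientFactorization hn hn' p))

lemma ofAdjoinRootFactor_root :
    ofAdjoinRootFactor hn hn' p (AdjoinRoot.root _) = algebraMap _ _ (AdjoinRoot.root p.1) :=
  AdjoinRoot.lift_root _

lemma ofAdjoinRootFactor_comp_of :
    (ofAdjoinRootFactor hn hn' p).comp (AdjoinRoot.of _) =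
      toRootQuotientFactorization hn hn' p :=
  AdjoinRoot.lift_comp_of _

lemma ofAdjoinRootFactor_comp_adjoinRootToFactor :
    (ofAdjoinRootFactor hn hn' p).comp (adjoinRootToFactor hn' p) = algebraMap _ _ := by
  refine AdjoinRoot.ringHom_ext ?_ ?_
  · rw [RingHom.comp_assoc, adjoinRootToFactor_comp_of, ← RingHom.comp_assoc,
      ofAdjoinRootFactor_comp_of]
    exact liftFactorization_comp_algebraMap ..
  · rw [RingHom.comp_apply, adjoinRootToFactor_root, ofAdjoinRootFactor_root]

lemma ofAdjoinRootFactor_comp_toAdjoinRootFactor :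
    (ofAdjoinRootFactor hn hn' p).comp (toAdjoinRootFactor hn hn' p) = .id _ := by
  refine ringHom_ext_factors ?_ ?_ ?_
  · rw [RingHom.comp_assoc, toAdjoinRootFactor, liftFactorization_comp_algebraMap,
      ofAdjoinRootFactor_comp_adjoinRootToFactor, RingHom.id_comp]
  · rw [← monicDegreeEq_map_map, toAdjoinRootFactor, factor₁_map_liftFactorization,
      monicDegreeEq_map_id, map_rootQuotient_eq_iff, ofAdjoinRootFactor_root,
      ofAdjoinRootFactor_comp_of, factor₁_map_toRootQuotientFactorization]
  · rw [← monicDegreeEq_map_map, toAdjoinRootFactor, factor₂_map_liftFactorization,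
      monicDegreeEq_map_map, ofAdjoinRootFactor_comp_of, toRootQuotientFactorization,
      factor₂_map_liftFactorization, monicDegreeEq_map_id]

lemma toAdjoinRootFactor_comp_algebraMap :
    (toAdjoinRootFactor hn hn' p).comp (algebraMap _ _) = adjoinRootToFactor hn' p :=
  liftFactorization_comp_algebraMap ..

lemma toAdjoinRootFactor_algebraMap_root :
    toAdjoinRootFactor hn hn' p (algebraMap _ _ (AdjoinRoot.root p.1)) = AdjoinRoot.root _ := by
  rw [← RingHom.comp_apply, toAdjoinRootFactor_comp_algebraMap, adjoinRootToFactor_root]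

lemma toAdjoinRootFactor_comp_toRootQuotientFactorization :
    (toAdjoinRootFactor hn hn' p).comp (toRootQuotientFactorization hn hn' p) =
      AdjoinRoot.of _ := by
  refine ringHom_ext_factors ?_ ?_ ?_
  · rw [RingHom.comp_assoc, toRootQuotientFactorization, liftFactorization_comp_algebraMap,
      ← RingHom.comp_assoc, toAdjoinRootFactor_comp_algebraMap, adjoinRootToFactor_comp_of]
  · rw [← monicDegreeEq_map_map, factor₁_map_toRootQuotientFactorization, map_monicMul,
      map_monicXSubC, toAdjoinRootFactor_algebraMap_root, toAdjoinRootFactor,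
      factor₁_map_liftFactorization, monicMul_rootQuotient]
  · rw [← monicDegreeEq_map_map, toRootQuotientFactorization, factor₂_map_liftFactorization,
      toAdjoinRootFactor, factor₂_map_liftFactorization]

lemma toAdjoinRootFactor_comp_ofAdjoinRootFactor :
    (toAdjoinRootFactor hn hn' p).comp (ofAdjoinRootFactor hn hn' p) = .id _ := by
  refine AdjoinRoot.ringHom_ext ?_ ?_
  · rw [RingHom.comp_assoc, ofAdjoinRootFactor_comp_of, RingHom.id_comp,
      toAdjoinRootFactor_comp_toRootQuotientFactorization]
  · rw [RingHom.comp_apply, ofAdjoinRootFactor_root, toAdjoinRootFactor_algebraMap_root,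
      RingHom.id_apply]

/-- Adjoining a root `x` of the first factor of the universal factorization of `p` is the same
as adjoining a root `x` of `p` and then universally factoring `p / (X - x)`. -/
noncomputable def adjoinRootFactorEquiv :
    AdjoinRoot (factor₁ (m + 1) k hn' p).1 ≃+*
      UniversalFactorizationRing m k hn (rootQuotient p) :=
  .ofRingHom (ofAdjoinRootFactor hn hn' p) (toAdjoinRootFactor hn hn' p)
    (ofAdjoinRootFactor_comp_toAdjoinRootFactor hn hn' p)
    (toAdjoinRootFactor_comp_ofAdjoinRootFactor hn hn' p)

lemma adjoinRootFactorEquiv_algebraMap (r : R) :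
    adjoinRootFactorEquiv hn hn' p (AdjoinRoot.of _ (algebraMap _ _ r)) =
      algebraMap _ _ (AdjoinRoot.of p.1 r) := by
  have h := ofAdjoinRootFactor_comp_adjoinRootToFactor hn hn' p
  rw [← RingHom.congr_fun h, RingHom.comp_apply, ← RingHom.comp_apply (adjoinRootToFactor hn' p),
    adjoinRootToFactor_comp_of]
  rfl

end AdjoinRootOfFactor

section Rank

open Module (finrank)

variable (K : Type*) [Field K] {R : Type*} [CommRing R] [Algebra K R]

lemma finrank_adjoinRoot_of_monicDegreeEq {d : ℕ} (g : MonicDegreeEq R d) :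
    finrank K (AdjoinRoot g.1) = finrank K R * d := by
  rcases subsingleton_or_nontrivial R with _ | _
  · have := Module.subsingleton R (AdjoinRoot g.1)
    rw [Module.finrank_zero_of_subsingleton, Module.finrank_zero_of_subsingleton, zero_mul]
  · have := g.monic.free_adjoinRoot
    rw [← Module.finrank_mul_finrank K R, (AdjoinRoot.powerBasis' g.monic).finrank,
      AdjoinRoot.powerBasis'_dim, g.natDegree]

variable {n m k : ℕ}

lemma finrank_factorization_mul (hn : n = m + k) (hn' : n + 1 = m + 1 + k)
    (p : MonicDegreeEq R (n + 1))
    [Algebra K (UniversalFactorizationRing (m + 1) k hn' p)]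
    [IsScalarTower K R (UniversalFactorizationRing (m + 1) k hn' p)]
    [Algebra K (UniversalFactorizationRing m k hn (rootQuotient p))]
    [IsScalarTower K (AdjoinRoot p.1) (UniversalFactorizationRing m k hn (rootQuotient p))] :
    finrank K (UniversalFactorizationRing (m + 1) k hn' p) * (m + 1) =
      finrank K (UniversalFactorizationRing m k hn (rootQuotient p)) := by
  rw [← finrank_adjoinRoot_of_monicDegreeEq K (factor₁ (m + 1) k hn' p)]
  refine Algebra.finrank_eq_of_equiv_equiv (.refl K) (adjoinRootFactorEquiv hn hn' p) ?_
  ext c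
  have h := adjoinRootFactorEquiv_algebraMap hn hn' p (algebraMap K R c)
  rw [← IsScalarTower.algebraMap_apply K R] at h
  rw [RingHom.comp_apply, IsScalarTower.algebraMap_apply K (AdjoinRoot p.1)]
  exact h.symm

theorem finrank_universalFactorizationRing (hn : n = m + k) (p : MonicDegreeEq R n)
    [Algebra K (UniversalFactorizationRing m k hn p)]
    [IsScalarTower K R (UniversalFactorizationRing m k hn p)] :
    finrank K (UniversalFactorizationRing m k hn p) = n.choose m * finrank K R := by
  induction m generalizing R n with
  | zero =>
    rw [Nat.choose_zero_right, one_mul]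
    let e := AlgEquiv.ofBijective (Algebra.ofId R _)
      (bijective_algebraMap_universalFactorizationRing_zero hn p)
    exact (e.restrictScalars K).toLinearEquiv.finrank_eq.symm
  | succ m ih =>
    obtain ⟨n, rfl⟩ : ∃ l, n = l + 1 := ⟨m + k, by omega⟩
    have hn₀ : n = m + k := by omega
    let := ((algebraMap (AdjoinRoot p.1)
      (UniversalFactorizationRing m k hn₀ (rootQuotient p))).comp (algebraMap K _)).toAlgebra
    have : IsScalarTower K (AdjoinRoot p.1)
      (UniversalFactorizationRing m k hn₀ (rootQuotient p)) := .of_algebraMap_eq' rfl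
    refine Nat.eq_of_mul_eq_mul_right m.succ_pos ?_
    calc finrank K (UniversalFactorizationRing (m + 1) k hn p) * (m + 1)
        = n.choose m * (finrank K R * (n + 1)) := by
          rw [finrank_factorization_mul K hn₀ hn, ih, finrank_adjoinRoot_of_monicDegreeEq]
      _ = (n + 1).choose (m + 1) * finrank K R * (m + 1) := by
          linear_combination finrank K R * Nat.add_one_mul_choose_eq n m

end Rank

section MonicOfCoeffs

variable {R S : Type*} [CommRing R] [CommRing S] {d : ℕ}

/-- The monic polynomial `X ^ d + a₁ X ^ (d - 1) + ⋯ + a_d`, where `a_(i+1)` is `a i`. -/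
noncomputable def monicOfCoeffs (a : Fin d → R) : MonicDegreeEq R d :=
  mapEquivMonic R R d (aeval (a ∘ Fin.rev))

lemma coeff_monicOfCoeffs (a : Fin d → R) (i : ℕ) :
    (monicOfCoeffs a).1.coeff i =
      if h : i < d then a (Fin.rev ⟨i, h⟩) else if i = d then 1 else 0 := by
  simp only [monicOfCoeffs, mapEquivMonic, Equiv.coe_fn_mk, MonicDegreeEq.map_coe,
    MonicDegreeEq.freeMonic_coe, Polynomial.coeff_map, Polynomial.coeff_freeMonic]
  split_ifs <;> simp

lemma coeff_reflect_monicOfCoeffs (a : Fin d → R) (r : ℕ) :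
    ((monicOfCoeffs a).1.reflect d).coeff r =
      if r = 0 then 1 else if h : 1 ≤ r ∧ r ≤ d then a ⟨r - 1, by omega⟩ else 0 := by
  rw [Polynomial.coeff_reflect, coeff_monicOfCoeffs]
  rcases le_or_gt r d with hr | hr
  · rw [Polynomial.revAt_le hr]
    grind
  · rw [Polynomial.revAt_eq_self_of_lt hr]
    grind

lemma map_monicOfCoeffs (φ : R →+* S) (a : Fin d → R) :
    (monicOfCoeffs a).map φ = monicOfCoeffs (φ ∘ a) := by
  ext i
  simp only [MonicDegreeEq.map_coe, Polynomial.coeff_map, coeff_monicOfCoeffs]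
  split_ifs <;> simp

lemma monicOfCoeffs_injective : Function.Injective (monicOfCoeffs (R := R) (d := d)) := by
  intro a b h
  ext i
  have := congrArg (·.1.coeff i.rev) h
  simp only [coeff_monicOfCoeffs, i.rev.is_lt, dif_pos, Fin.eta, Fin.rev_rev] at this
  exact this

lemma monicOfCoeffs_surjective : Function.Surjective (monicOfCoeffs (R := R) (d := d)) := by
  refine fun g ↦ ⟨fun i ↦ g.1.coeff i.rev, ?_⟩
  ext i
  rw [coeff_monicOfCoeffs]
  split_ifs with hi hd
  · rw [Fin.rev_rev]
  · rw [hd, g.2.1]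
  · exact (g.2.2 i (by omega)).symm

/-- The polynomial `X ^ d`, as a monic polynomial of degree `d`. -/
noncomputable def monicXPow (R : Type*) [CommRing R] (d : ℕ) : MonicDegreeEq R d :=
  ⟨Polynomial.X ^ d, by simp, fun i hi ↦ by simp [Polynomial.coeff_X_pow, hi.ne']⟩

lemma map_monicXPow (φ : R →+* S) (d : ℕ) : (monicXPow R d).map φ = monicXPow S d :=
  Subtype.ext (by simp [monicXPow])

lemma eq_monicXPow_iff {f : MonicDegreeEq R d} :
    f = monicXPow R d ↔ ∀ i < d, f.1.coeff i = 0 := by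
  refine ⟨?_, fun h ↦ ?_⟩
  · rintro rfl i hi
    simp [monicXPow, Polynomial.coeff_X_pow, hi.ne]
  · ext i
    rcases lt_or_ge i d with hi | hi
    · simp [monicXPow, Polynomial.coeff_X_pow, h i hi, hi.ne]
    · rw [f.coeff_of_ge i hi, (monicXPow R d).coeff_of_ge i hi]

end MonicOfCoeffs

section Grassmannian

/-- The polynomial `t^k + p_1 t^(k-1) + ⋯ + p_k`. -/
noncomputable def monicP (n k : ℕ) : MonicDegreeEq (PR n k) k :=
  monicOfCoeffs fun i ↦ X (.inl i)

/-- The polynomial `t^(n-k) + q_1 t^(n-k-1) + ⋯ + q_(n-k)`. -/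
noncomputable def monicQ (n k : ℕ) : MonicDegreeEq (PR n k) (n - k) :=
  monicOfCoeffs fun i ↦ X (.inr i)

lemma coeff_reflect_monicP (n k r : ℕ) : ((monicP n k).1.reflect k).coeff r = pZ n k r := by
  rw [monicP, coeff_reflect_monicOfCoeffs, pZ]
  grind

lemma coeff_reflect_monicQ (n k s : ℕ) :
    ((monicQ n k).1.reflect (n - k)).coeff s = qZ n k s := by
  rw [monicQ, coeff_reflect_monicOfCoeffs, qZ]
  grind

variable {n k : ℕ} (hn : n = k + (n - k))

lemma Rm_eq_coeff_s18 {m : ℕ} (hm : m ≤ n) :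
    Rm n k m = (monicMul hn (monicP n k) (monicQ n k)).1.coeff (n - m) := by
  have hmul : (monicMul hn (monicP n k) (monicQ n k)).1.reflect n =
      (monicP n k).1.reflect k * (monicQ n k).1.reflect (n - k) := by
    rw [← Polynomial.reflect_mul _ _ (monicP n k).natDegree.le (monicQ n k).natDegree.le, ← hn]
    rfl
  rw [← Polynomial.revAt_le hm, ← Polynomial.coeff_reflect, hmul, Polynomial.coeff_mul, Rm]
  simp only [coeff_reflect_monicP, coeff_reflect_monicQ]

variable {S : Type*} [CommRing S]

lemma Igr_le_ker_iff {φ : PR n k →+* S} :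
    Igr n k ≤ RingHom.ker φ ↔
      monicMul hn ((monicP n k).map φ) ((monicQ n k).map φ) = monicXPow S n := by
  simp only [← map_monicMul, eq_monicXPow_iff, Igr, Ideal.span_le, Set.image_subset_iff,
    MonicDegreeEq.map_coe, Polynomial.coeff_map]
  constructor
  · intro h i hi
    have hR : φ (Rm n k (n - i)) = 0 := h (by simp; omega)
    rwa [Rm_eq_coeff_s18 hn (n.sub_le i), Nat.sub_sub_self hi.le] at hR
  · intro h m hm
    obtain ⟨hm₁, hmn⟩ := Finset.mem_Icc.1 hm
    change φ (Rm n k m) = 0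
    rw [Rm_eq_coeff_s18 hn hmn]
    exact h (n - m) (by omega)

lemma exists_algHom_map_monic_eq [Algebra ℂ S] (g : MonicDegreeEq S k)
    (h : MonicDegreeEq S (n - k)) :
    ∃ φ : PR n k →ₐ[ℂ] S, (monicP n k).map φ.toRingHom = g ∧
      (monicQ n k).map φ.toRingHom = h := by
  obtain ⟨a, rfl⟩ := monicOfCoeffs_surjective g
  obtain ⟨b, rfl⟩ := monicOfCoeffs_surjective h
  refine ⟨aeval (Sum.elim a b), ?_, ?_⟩
  · rw [monicP, map_monicOfCoeffs]
    exact congrArg _ (funext fun i ↦ aeval_X (R := ℂ) (Sum.elim a b) _)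
  · rw [monicQ, map_monicOfCoeffs]
    exact congrArg _ (funext fun i ↦ aeval_X (R := ℂ) (Sum.elim a b) _)

lemma ringHom_ext_monic {φ ψ : PR n k →+* S} (hC : φ.comp C = ψ.comp C)
    (hP : (monicP n k).map φ = (monicP n k).map ψ)
    (hQ : (monicQ n k).map φ = (monicQ n k).map ψ) : φ = ψ := by
  rw [monicP, map_monicOfCoeffs, map_monicOfCoeffs, monicOfCoeffs_injective.eq_iff] at hP
  rw [monicQ, map_monicOfCoeffs, map_monicOfCoeffs, monicOfCoeffs_injective.eq_iff] at hQ
  exact ringHom_ext' hC (Sum.rec (congrFun hP) (congrFun hQ))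

theorem nonempty_quotient_algEquiv :
    Nonempty ((PR n k ⧸ Igr n k) ≃ₐ[ℂ]
      UniversalFactorizationRing k (n - k) hn (monicXPow ℂ n)) := by
  obtain ⟨φ, hP, hQ⟩ := exists_algHom_map_monic_eq
    (factor₁ k (n - k) hn (monicXPow ℂ n)) (factor₂ k (n - k) hn (monicXPow ℂ n))
  have hφC : φ.toRingHom.comp C = algebraMap ℂ _ := φ.comp_algebraMap
  have hφ : Igr n k ≤ RingHom.ker φ.toRingHom := by
    refine (Igr_le_ker_iff hn).2 ?_
    rw [hP, hQ, monicMul_factors, map_monicXPow]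
  let π := Ideal.Quotient.mk (Igr n k)
  let Φ := Ideal.Quotient.liftₐ (Igr n k) φ fun _ ha ↦ hφ ha
  let Ψ := liftFactorization hn (monicXPow ℂ n) (algebraMap ℂ (PR n k ⧸ Igr n k))
    ((monicP n k).map π) ((monicQ n k).map π) <| by
      rw [map_monicXPow, ← Igr_le_ker_iff, Ideal.mk_ker]
  have hΦπ : Φ.toRingHom.comp π = φ.toRingHom :=
    Ideal.Quotient.lift_comp_mk (Igr n k) φ.toRingHom fun _ ha ↦ hφ ha
  have hΦ : Φ.toRingHom.comp (algebraMap ℂ _) = algebraMap ℂ _ := Φ.comp_algebraMap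
  have hΨ : Ψ.comp (algebraMap ℂ _) = algebraMap ℂ _ := liftFactorization_comp_algebraMap ..
  have hΦΨ : Φ.toRingHom.comp Ψ = .id _ := by
    refine ringHom_ext_factors ?_ ?_ ?_
    · rw [RingHom.comp_assoc, hΨ, hΦ, RingHom.id_comp]
    · rw [← monicDegreeEq_map_map, factor₁_map_liftFactorization, monicDegreeEq_map_map, hΦπ, hP,
        monicDegreeEq_map_id]
    · rw [← monicDegreeEq_map_map, factor₂_map_liftFactorization, monicDegreeEq_map_map, hΦπ, hQ,
        monicDegreeEq_map_id]
  have hΨφ : Ψ.comp φ.toRingHom = π := by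
    refine ringHom_ext_monic ?_ ?_ ?_
    · rw [RingHom.comp_assoc, hφC, hΨ]
      rfl
    · rw [← monicDegreeEq_map_map, hP, factor₁_map_liftFactorization]
    · rw [← monicDegreeEq_map_map, hQ, factor₂_map_liftFactorization]
  have hΨΦ : Ψ.comp Φ.toRingHom = .id _ := by
    refine Ideal.Quotient.ringHom_ext ?_
    rw [RingHom.comp_assoc, hΦπ, hΨφ, RingHom.id_comp]
  exact ⟨.ofRingEquiv (f := .ofRingHom Φ Ψ hΦΨ hΨΦ) Φ.commutes⟩

end Grassmannian

/-- The quotient `A = P/I` (the cohomology ring of the complex Grassmannian `Gr(k,n)`)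
is a finite-dimensional `ℂ`-vector space of dimension the binomial coefficient `C(n,k)`
(the dimension of the `k`-th exterior power of the standard `n`-dimensional representation). -/
theorem quotient_dimension_choose (n k : ℕ) (hk1 : 1 ≤ k) (hk2 : k ≤ n - 1) :
    FiniteDimensional ℂ (PR n k ⧸ Igr n k)
    ∧ Module.finrank ℂ (PR n k ⧸ Igr n k) = Nat.choose n k := by
  have hn : n = k + (n - k) := by omega
  obtain ⟨e⟩ := nonempty_quotient_algEquiv hn
  refine ⟨Module.Finite.equiv e.symm.toLinearEquiv, ?_⟩
  rw [e.toLinearEquiv.finrank_eq, finrank_universalFactorizationRing ℂ hn, Module.finrank_self,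
    mul_one]
end
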